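/- Synchronous if rule: let x be a logical variable and assume LVals contains two distinct values denoted 1 and 2. Let C, C1, C2, C1', C2' be commands and P, P1, P2, R1, R2, Q1, Q2 hyper-assertions. If (1) ⊨ {P} C1 {P1}, (2) ⊨ {P} C2 {P2}, (3) ⊨ {P1 ⊗_{x=1,2} P2} C {R1 ⊗_{x=1,2} R2}, (4) ⊨ {R1} C1' {Q1}, (5) ⊨ {R2} C2' {Q2}, and (6) P1, P2, R1, R2 are insensitive to the logical variable x, then the hyper-triple ⊨ {P} (C1 ; C ; C1') + (C2 ; C ; C2') {Q1 ⊗ Q2} is valid. -/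

import Mathlib

/-- Commands of the programming language. -/
inductive Cmd (PVar PVal : Type) : Type where
  | skip : Cmd PVar PVal
  | assign : PVar → ((PVar → PVal) → PVal) → Cmd PVar PVal
  | havoc : PVar → Cmd PVar PVal
  | assume : ((PVar → PVal) → Prop) → Cmd PVar PVal
  | seq : Cmd PVar PVal → Cmd PVar PVal → Cmd PVar PVal
  | choice : Cmd PVar PVal → Cmd PVar PVal → Cmd PVar PVal
  | iter : Cmd PVar PVal → Cmd PVar PVal

/-- Big-step semantics ⟨C, σ⟩ → σ'. -/
inductive BigStep {PVar PVal : Type} [DecidableEq PVar] :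
    Cmd PVar PVal → (PVar → PVal) → (PVar → PVal) → Prop where
  | skip (σ : PVar → PVal) : BigStep Cmd.skip σ σ
  | assign (x : PVar) (e : (PVar → PVal) → PVal) (σ : PVar → PVal) :
      BigStep (Cmd.assign x e) σ (Function.update σ x (e σ))
  | havoc (x : PVar) (σ : PVar → PVal) (v : PVal) :
      BigStep (Cmd.havoc x) σ (Function.update σ x v)
  | assume {b : (PVar → PVal) → Prop} {σ : PVar → PVal} (h : b σ) :
      BigStep (Cmd.assume b) σ σ
  | seq {C1 C2 : Cmd PVar PVal} {σ σ' σ'' : PVar → PVal} :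
      BigStep C1 σ σ' → BigStep C2 σ' σ'' → BigStep (Cmd.seq C1 C2) σ σ''
  | choiceL {C1 C2 : Cmd PVar PVal} {σ σ' : PVar → PVal} :
      BigStep C1 σ σ' → BigStep (Cmd.choice C1 C2) σ σ'
  | choiceR {C1 C2 : Cmd PVar PVal} {σ σ' : PVar → PVal} :
      BigStep C2 σ σ' → BigStep (Cmd.choice C1 C2) σ σ'
  | iterNil {C : Cmd PVar PVal} {σ : PVar → PVal} : BigStep (Cmd.iter C) σ σ
  | iterCons {C : Cmd PVar PVal} {σ σ' σ'' : PVar → PVal} :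
      BigStep C σ σ' → BigStep (Cmd.iter C) σ' σ'' → BigStep (Cmd.iter C) σ σ''

/-- Extended states: a logical state paired with a program state. -/
abbrev EState (PVar PVal LVar LVal : Type) : Type :=
  (LVar → LVal) × (PVar → PVal)

/-- Extended semantics of a command on a set of extended states. -/
def sem {PVar PVal LVar LVal : Type} [DecidableEq PVar] (C : Cmd PVar PVal)
    (S : Set (EState PVar PVal LVar LVal)) : Set (EState PVar PVal LVar LVal) :=
  { φ | ∃ σ : PVar → PVal, (φ.1, σ) ∈ S ∧ BigStep C σ φ.2 }

/-- Hyper-assertions: predicates over sets of extended states. -/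
abbrev HAssn (PVar PVal LVar LVal : Type) : Type :=
  Set (EState PVar PVal LVar LVal) → Prop

/-- Validity of a hyper-triple ⊨ {P} C {Q}. -/
def HyperTriple {PVar PVal LVar LVal : Type} [DecidableEq PVar]
    (P : HAssn PVar PVal LVar LVal) (C : Cmd PVar PVal)
    (Q : HAssn PVar PVal LVar LVal) : Prop :=
  ∀ S : Set (EState PVar PVal LVar LVal), P S → Q (sem C S)

/-- The ⊗ operator on hyper-assertions. -/
def otimes {PVar PVal LVar LVal : Type} (Q1 Q2 : HAssn PVar PVal LVar LVal) :
    HAssn PVar PVal LVar LVal :=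
  fun S => ∃ S1 S2, S = S1 ∪ S2 ∧ Q1 S1 ∧ Q2 S2

/-- The ⊗_{x=1,2} operator: A holds of the states tagged with value `one` for the
logical variable x, and B holds of those tagged with `two`. -/
def otimesTag {PVar PVal LVar LVal : Type} (x : LVar) (one two : LVal)
    (A B : HAssn PVar PVal LVar LVal) : HAssn PVar PVal LVar LVal :=
  fun S => A { φ ∈ S | φ.1 x = one } ∧ B { φ ∈ S | φ.1 x = two }

/-- A hyper-assertion is insensitive to the logical variable x iff its truth value on a
set is unchanged when the value of x in the logical state of each state of the set is
replaced arbitrarily. -/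
def InsensAssn {PVar PVal LVar LVal : Type} [DecidableEq LVar] (x : LVar)
    (A : HAssn PVar PVal LVar LVal) : Prop :=
  ∀ (S : Set (EState PVar PVal LVar LVal)) (g : EState PVar PVal LVar LVal → LVal),
    A S ↔ A ((fun φ => (Function.update φ.1 x (g φ), φ.2)) '' S)

/-!
Run `C` once on the union of the two intermediate sets `sem C1 S` and `sem C2 S`, after tagging the
states of the first with `x = one` and those of the second with `x = two`. A command neither reads
nor writes logical variables, so the tags survive `C` and the two parts can be separated again
afterwards; insensitivity to `x` lets the tags be added before `C` and erased after it.
-/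

section Sem

variable {PVar PVal LVar LVal : Type} [DecidableEq PVar]

theorem sem_seq (C D : Cmd PVar PVal) (S : Set (EState PVar PVal LVar LVal)) :
    sem (Cmd.seq C D) S = sem D (sem C S) := by
  ext φ
  constructor
  · rintro ⟨σ, hσ, hCD⟩
    cases hCD with
    | @seq _ _ _ τ _ hC hD => exact ⟨τ, ⟨σ, hσ, hC⟩, hD⟩
  · rintro ⟨τ, ⟨σ, hσ, hC⟩, hD⟩
    exact ⟨σ, hσ, .seq hC hD⟩

theorem sem_choice (C D : Cmd PVar PVal) (S : Set (EState PVar PVal LVar LVal)) :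
    sem (Cmd.choice C D) S = sem C S ∪ sem D S := by
  ext φ
  constructor
  · rintro ⟨σ, hσ, hCD⟩
    cases hCD with
    | choiceL hC => exact .inl ⟨σ, hσ, hC⟩
    | choiceR hD => exact .inr ⟨σ, hσ, hD⟩
  · rintro (⟨σ, hσ, hC⟩ | ⟨σ, hσ, hD⟩)
    · exact ⟨σ, hσ, .choiceL hC⟩
    · exact ⟨σ, hσ, .choiceR hD⟩

theorem sem_union (C : Cmd PVar PVal) (S T : Set (EState PVar PVal LVar LVal)) :
    sem C (S ∪ T) = sem C S ∪ sem C T := by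
  ext φ
  simp only [sem, Set.mem_ofPred_eq, Set.mem_union, or_and_right, exists_or]

theorem sem_image_map_id {LVar' LVal' : Type} (f : (LVar → LVal) → (LVar' → LVal'))
    (C : Cmd PVar PVal) (S : Set (EState PVar PVal LVar LVal)) :
    sem C (Prod.map f id '' S) = Prod.map f id '' sem C S := by
  ext φ
  constructor
  · rintro ⟨σ, ⟨ψ, hψ, hψφ⟩, hC⟩
    obtain ⟨hf, rfl⟩ := Prod.mk.inj hψφ
    exact ⟨(ψ.1, φ.2), ⟨ψ.2, hψ, hC⟩, Prod.ext hf rfl⟩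
  · rintro ⟨ψ, ⟨σ, hσ, hC⟩, rfl⟩
    exact ⟨σ, ⟨(ψ.1, σ), hσ, rfl⟩, hC⟩

end Sem

section Tag

variable {PVar PVal LVar LVal : Type} [DecidableEq LVar]

/-- The set `S` with the logical variable `x` overwritten by `v` in every state. Tagging two sets
with distinct values allows them to be recovered from their union. -/
def tag (x : LVar) (v : LVal) (S : Set (EState PVar PVal LVar LVal)) :
    Set (EState PVar PVal LVar LVal) :=
  Prod.map (Function.update · x v) id '' S

theorem sem_tag [DecidableEq PVar] (x : LVar) (v : LVal) (C : Cmd PVar PVal)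
    (S : Set (EState PVar PVal LVar LVal)) : sem C (tag x v S) = tag x v (sem C S) :=
  sem_image_map_id _ C S

theorem apply_eq_of_mem_tag {x : LVar} {v : LVal} {S : Set (EState PVar PVal LVar LVal)}
    {φ : EState PVar PVal LVar LVal} (hφ : φ ∈ tag x v S) : φ.1 x = v := by
  obtain ⟨ψ, -, rfl⟩ := hφ
  exact Function.update_self x v ψ.1

theorem sep_tag_union_tag_left (x : LVar) {v w : LVal} (hvw : v ≠ w)
    (S T : Set (EState PVar PVal LVar LVal)) :
    {φ ∈ tag x v S ∪ tag x w T | φ.1 x = v} = tag x v S := by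
  ext φ
  constructor
  · rintro ⟨hφ | hφ, hv⟩
    · exact hφ
    · exact absurd (hv.symm.trans (apply_eq_of_mem_tag hφ)) hvw
  · exact fun hφ => ⟨.inl hφ, apply_eq_of_mem_tag hφ⟩

theorem sep_tag_union_tag_right (x : LVar) {v w : LVal} (hvw : v ≠ w)
    (S T : Set (EState PVar PVal LVar LVal)) :
    {φ ∈ tag x v S ∪ tag x w T | φ.1 x = w} = tag x w T := by
  rw [Set.union_comm, sep_tag_union_tag_left x hvw.symm]

theorem InsensAssn.tag_iff {x : LVar} {A : HAssn PVar PVal LVar LVal} (hA : InsensAssn x A)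
    (v : LVal) (S : Set (EState PVar PVal LVar LVal)) : A (tag x v S) ↔ A S :=
  (hA S fun _ => v).symm

theorem otimesTag_tag_union_tag_iff {x : LVar} {v w : LVal} (hvw : v ≠ w)
    {A B : HAssn PVar PVal LVar LVal} (hA : InsensAssn x A) (hB : InsensAssn x B)
    (S T : Set (EState PVar PVal LVar LVal)) :
    otimesTag x v w A B (tag x v S ∪ tag x w T) ↔ A S ∧ B T := by
  rw [otimesTag, sep_tag_union_tag_left x hvw, sep_tag_union_tag_right x hvw,
    hA.tag_iff, hB.tag_iff]

theorem HyperTriple.sem_and_sem_of_otimesTag [DecidableEq PVar] {x : LVar} {v w : LVal}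
    (hvw : v ≠ w) {C : Cmd PVar PVal} {A B A' B' : HAssn PVar PVal LVar LVal}
    (hC : HyperTriple (otimesTag x v w A B) C (otimesTag x v w A' B'))
    (hA : InsensAssn x A) (hB : InsensAssn x B) (hA' : InsensAssn x A') (hB' : InsensAssn x B')
    {S T : Set (EState PVar PVal LVar LVal)} (hS : A S) (hT : B T) :
    A' (sem C S) ∧ B' (sem C T) := by
  have tagged_post := hC _ ((otimesTag_tag_union_tag_iff hvw hA hB S T).2 ⟨hS, hT⟩)
  rw [sem_union, sem_tag, sem_tag] at tagged_post
  exact (otimesTag_tag_union_tag_iff hvw hA' hB' _ _).1 tagged_post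

end Tag

/-- Synchronous if rule. -/
theorem synchronous_if_rule {PVar PVal LVar LVal : Type}
    [DecidableEq PVar] [DecidableEq LVar]
    (x : LVar) (one two : LVal) (h12 : one ≠ two)
    (C C1 C2 C1' C2' : Cmd PVar PVal)
    (P P1 P2 R1 R2 Q1 Q2 : HAssn PVar PVal LVar LVal)
    (h1 : HyperTriple P C1 P1)
    (h2 : HyperTriple P C2 P2)
    (h3 : HyperTriple (otimesTag x one two P1 P2) C (otimesTag x one two R1 R2))
    (h4 : HyperTriple R1 C1' Q1)
    (h5 : HyperTriple R2 C2' Q2)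
    (hP1 : InsensAssn x P1) (hP2 : InsensAssn x P2)
    (hR1 : InsensAssn x R1) (hR2 : InsensAssn x R2) :
    HyperTriple P
      (Cmd.choice (Cmd.seq C1 (Cmd.seq C C1')) (Cmd.seq C2 (Cmd.seq C C2')))
      (otimes Q1 Q2) := by
  intro S hS
  obtain ⟨hSR1, hSR2⟩ : R1 (sem C (sem C1 S)) ∧ R2 (sem C (sem C2 S)) :=
    h3.sem_and_sem_of_otimesTag h12 hP1 hP2 hR1 hR2 (h1 S hS) (h2 S hS)
  simp only [sem_choice, sem_seq]
  exact ⟨_, _, rfl, h4 _ hSR1, h5 _ hSR2⟩
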